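/- Let p be an odd prime and q ≥ 12 an integer with p − q < (1/5)·q, and let d be an integer with q ≤ d ≤ p. Let R be a (p+1)-regular finite simple graph with an even number of vertices and λ(R) ≤ 2√p. Then R contains p − d pairwise edge-disjoint perfect matchings, and the graph H obtained from R by deleting the edges of these p − d perfect matchings is (d+1)-regular and satisfies λ(H) ≤ 2√d + (2/5)·d and girth(H) ≥ girth(R). -/

import Mathlib

open Classical

noncomputable section

namespace Formal

variable {V : Type*} [Fintype V] [DecidableEq V]

/-- The real adjacency matrix of a finite simple graph. -/
def adjMat (G : SimpleGraph V) : Matrix V V ℝ :=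
  letI := Classical.decRel G.Adj
  SimpleGraph.adjMatrix ℝ G

lemma adjMat_isHermitian (G : SimpleGraph V) : (adjMat G).IsHermitian := by
  letI := Classical.decRel G.Adj
  unfold adjMat
  rw [Matrix.IsHermitian, Matrix.conjTranspose_eq_transpose_of_trivial]
  exact SimpleGraph.isSymm_adjMatrix G

/-- `G` is `k`-regular: every vertex has exactly `k` neighbours. -/
def IsRegular (G : SimpleGraph V) (k : ℕ) : Prop :=
  ∀ v : V, (G.neighborSet v).ncard = k

/-- The eigenvalues (with multiplicity) of the adjacency matrix, indexed by vertices. -/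
def eigs (G : SimpleGraph V) : V → ℝ :=
  (adjMat_isHermitian G).eigenvalues

/-- The absolute values of the adjacency eigenvalues, sorted in increasing order. -/
def sortedAbsEigs (G : SimpleGraph V) : List ℝ :=
  (Finset.univ.val.map fun i => |eigs G i|).sort (· ≤ ·)

/-- `λ(G)`: the second largest absolute value of an eigenvalue (with multiplicity). -/
def secondLargestAbsEig (G : SimpleGraph V) : ℝ :=
  (sortedAbsEigs G).getD (Fintype.card V - 2) 0

/-- `λ₃(G)`: the third largest absolute value of an eigenvalue (with multiplicity). -/
def thirdLargestAbsEig (G : SimpleGraph V) : ℝ :=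
  (sortedAbsEigs G).getD (Fintype.card V - 3) 0

/-- `μ` has a `(k, ε)`-localized (ℓ²-normalized) eigenvector for `A(G)`. -/
def HasLocalizedEigenvector (G : SimpleGraph V) (μ : ℝ) (k : ℕ) (ε : ℝ) : Prop :=
  ∃ v : V → ℝ, (adjMat G).mulVec v = μ • v ∧ (∑ x, (v x) ^ 2) = 1 ∧
    ∃ S : Finset V, S.card = k ∧ ε ≤ ∑ x ∈ S, (v x) ^ 2

/-- There are `r` distinct eigenvalues of `A(G)`, each with a `(k, ε)`-localized
eigenvector for some `k ≤ bound`. -/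
def LocalizedSpectrum (G : SimpleGraph V) (r : ℕ) (ε bound : ℝ) : Prop :=
  ∃ Λ : Finset ℝ, Λ.card = r ∧
    ∀ μ ∈ Λ, ∃ k : ℕ, (k : ℝ) ≤ bound ∧ HasLocalizedEigenvector G μ k ε

/-- `girth(G) ≥ x` for a real number `x` (`girth = ⊤` counts as `≥ x`). -/
def girthGe {W : Type*} (G : SimpleGraph W) (x : ℝ) : Prop :=
  ∀ g : ℕ, G.girth = g → x ≤ g

/-- `girth(G) > x` for a real number `x` (`girth = ⊤` counts as `> x`). -/
def girthGt {W : Type*} (G : SimpleGraph W) (x : ℝ) : Prop :=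
  ∀ g : ℕ, G.girth = g → x < g

/-- The `j`-th prime, so `nthPrime 1 = 2`, `nthPrime 2 = 3`, ..., `nthPrime 10 = 29`. -/
def nthPrime (j : ℕ) : ℕ :=
  Nat.nth Nat.Prime (j - 1)

/-!
For a `k`-regular graph on `n` vertices, at least `(k - λ) |C| |Cᶜ| / n` edges leave a vertex set
`C`. If `λ + 2 ≤ k`, then at least `k` edges leave every nonempty set of at most `n / 2` vertices:
sets with more than `k` vertices are handled by this bound, and smaller ones by counting inner
edges. In Tutte's condition all but one of the odd components of `G - S` are that small, and
together they send at most `k |S|` edges to `S`; so if `n` is even, there is a perfect matching.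

Deleting a perfect matching perturbs the adjacency matrix by a matrix of norm at most `1`, so by
Weyl's inequality `λ` grows by at most `1` while the degree drops by `1`. Hence `m` perfect
matchings can be deleted one after another as long as `λ + 2 m ≤ k`. For `λ ≤ 2 √p` and `k = p + 1`
this allows `m = p - d < p / 6`, and since `√p + √d ≥ 2` the remaining graph has
`λ ≤ 2 √p + (p - d) ≤ 2 √d + 2 (p - d) ≤ 2 √d + (2 / 5) d`.
-/

lemma getElem_le_iff_countP_add_lt_length {α : Type*} [LinearOrder α] {l : List α}
    (hl : l.Pairwise (· ≤ ·)) {i : ℕ} (hi : i < l.length) (c : α) :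
    l[i] ≤ c ↔ l.countP (c < ·) + i < l.length := by
  induction l generalizing i with
  | nil => simp at hi
  | cons a l ih =>
    rw [List.pairwise_cons] at hl
    have hcount := List.countP_le_length (p := (c < ·)) (l := l)
    rcases le_or_gt a c with ha | ha
    · rw [List.countP_cons_of_neg (by simpa using ha), List.length_cons]
      cases i with
      | zero => simpa [ha] using Nat.lt_succ_of_le hcount
      | succ i =>
        have hi' : i < l.length := by simpa using hi
        rw [List.getElem_cons_succ, ih hl.2 hi']
        omega
    · have hall : (a :: l).countP (c < ·) = (a :: l).length := by
        simpa [ha] using fun b hb => ha.trans_le (hl.1 b hb)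
      have hget : c < (a :: l)[i] := by
        simpa using List.countP_eq_length.1 hall _ (List.getElem_mem hi)
      exact iff_of_false hget.not_ge (by rw [hall]; omega)

section HermitianMatrix

open InnerProductSpace
open scoped Matrix.Norms.L2Operator

variable {𝕜 n : Type*} [RCLike 𝕜] [Fintype n] [DecidableEq n] {A B : Matrix n n 𝕜}

lemma inner_eigenvectorBasis_toEuclideanLin (hA : A.IsHermitian) (i : n)
    (v : EuclideanSpace 𝕜 n) :
    inner 𝕜 (hA.eigenvectorBasis i) (A.toEuclideanLin v) =
      hA.eigenvalues i * inner 𝕜 (hA.eigenvectorBasis i) v := by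
  have heig : A.toEuclideanLin (hA.eigenvectorBasis i) =
      (hA.eigenvalues i : 𝕜) • hA.eigenvectorBasis i := by
    ext x
    simpa [Matrix.toLpLin_apply, RCLike.real_smul_eq_coe_mul] using
      congrFun (hA.mulVec_eigenvectorBasis i) x
  rw [← Matrix.isSymmetric_toEuclideanLin_iff.2 hA, heig, inner_smul_left, RCLike.conj_ofReal]

lemma sq_norm_toEuclideanLin (hA : A.IsHermitian) (v : EuclideanSpace 𝕜 n) :
    ‖A.toEuclideanLin v‖ ^ 2 =
      ∑ i, hA.eigenvalues i ^ 2 * ‖inner 𝕜 (hA.eigenvectorBasis i) v‖ ^ 2 := by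
  rw [← hA.eigenvectorBasis.sum_sq_norm_inner_right]
  simp [inner_eigenvectorBasis_toEuclideanLin, mul_pow]

lemma norm_toEuclideanLin_le_of_inner_eq_zero (hA : A.IsHermitian) {c : ℝ} (hc : 0 ≤ c)
    {v : EuclideanSpace 𝕜 n}
    (hv : ∀ i, c < |hA.eigenvalues i| → inner 𝕜 (hA.eigenvectorBasis i) v = 0) :
    ‖A.toEuclideanLin v‖ ≤ c * ‖v‖ := by
  refine le_of_sq_le_sq ?_ (by positivity)
  rw [sq_norm_toEuclideanLin hA, mul_pow, ← hA.eigenvectorBasis.sum_sq_norm_inner_right,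
    Finset.mul_sum]
  refine Finset.sum_le_sum fun i _ => ?_
  rcases le_or_gt |hA.eigenvalues i| c with hi | hi
  · gcongr ?_ * _
    exact sq_le_sq.2 (hi.trans (le_abs_self c))
  · simp [hv i hi]

lemma lt_norm_toEuclideanLin_of_inner_eq_zero (hA : A.IsHermitian) {c : ℝ} (hc : 0 ≤ c)
    {v : EuclideanSpace 𝕜 n} (hv₀ : v ≠ 0)
    (hv : ∀ i, |hA.eigenvalues i| ≤ c → inner 𝕜 (hA.eigenvectorBasis i) v = 0) :
    c * ‖v‖ < ‖A.toEuclideanLin v‖ := by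
  have hsq {i} (hi : c < |hA.eigenvalues i|) : c ^ 2 < hA.eigenvalues i ^ 2 :=
    sq_lt_sq.2 (by rwa [abs_of_nonneg hc])
  obtain ⟨i, hi⟩ : ∃ i, inner 𝕜 (hA.eigenvectorBasis i) v ≠ 0 := by
    by_contra! h
    exact hv₀ (ext_inner_left_basis hA.eigenvectorBasis.toBasis (by simpa using h))
  refine lt_of_pow_lt_pow_left₀ 2 (norm_nonneg _) ?_
  rw [sq_norm_toEuclideanLin hA, mul_pow, ← hA.eigenvectorBasis.sum_sq_norm_inner_right,
    Finset.mul_sum]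
  refine Finset.sum_lt_sum (fun j _ => ?_) ⟨i, Finset.mem_univ i, ?_⟩
  · rcases le_or_gt |hA.eigenvalues j| c with hj | hj
    · simp [hv j hj]
    · gcongr ?_ * _
      exact (hsq hj).le
  · exact mul_lt_mul_of_pos_right (hsq (not_le.1 (mt (hv i) hi))) (by positivity)

lemma subsingleton_setOf_lt_abs_eigenvalues_iff (hA : A.IsHermitian) {c : ℝ} (hc : 0 ≤ c) :
    {i | c < |hA.eigenvalues i|}.Subsingleton ↔
      ∃ u : EuclideanSpace 𝕜 n, ∀ v, inner 𝕜 u v = 0 → ‖A.toEuclideanLin v‖ ≤ c * ‖v‖ := by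
  set b := hA.eigenvectorBasis
  constructor
  · intro h
    rcases h.eq_empty_or_singleton with h | ⟨i, h⟩
    · exact ⟨0, fun v _ => norm_toEuclideanLin_le_of_inner_eq_zero hA hc fun j hj =>
        (h.subset hj).elim⟩
    · refine ⟨b i, fun v hv => norm_toEuclideanLin_le_of_inner_eq_zero hA hc fun j hj => ?_⟩
      rwa [h.subset hj]
  · rintro ⟨u, hu⟩ i hi j hj
    by_contra hij
    -- The plane spanned by `b i` and `b j` meets the hyperplane orthogonal to `u`.
    obtain ⟨w, hw₀, huw, hw⟩ : ∃ w : EuclideanSpace 𝕜 n, w ≠ 0 ∧ inner 𝕜 u w = 0 ∧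
        ∀ l, l ≠ i → l ≠ j → inner 𝕜 (b l) w = 0 := by
      by_cases hui : inner 𝕜 u (b i) = 0
      · exact ⟨b i, b.orthonormal.ne_zero i, hui, fun l hl _ => b.inner_eq_zero hl⟩
      · refine ⟨b j - (inner 𝕜 u (b j) / inner 𝕜 u (b i)) • b i, fun h => ?_, ?_, fun l hi hj => ?_⟩
        · have := congrArg (inner 𝕜 (b j)) h
          simp [inner_sub_right, inner_smul_right, b.inner_eq_zero (Ne.symm hij)] at this
        · rw [inner_sub_right, inner_smul_right, div_mul_cancel₀ _ hui, sub_self]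
        · simp [inner_sub_right, inner_smul_right, b.inner_eq_zero hi, b.inner_eq_zero hj]
    refine (lt_norm_toEuclideanLin_of_inner_eq_zero hA hc hw₀ fun l hl => ?_).not_ge (hu w huw)
    exact hw l (fun h => (h ▸ hl).not_gt hi) (fun h => (h ▸ hl).not_gt hj)

lemma subsingleton_setOf_add_norm_sub_lt_abs_eigenvalues (hA : A.IsHermitian)
    (hB : B.IsHermitian) {c : ℝ} (hc : 0 ≤ c)
    (h : {i | c < |hA.eigenvalues i|}.Subsingleton) :
    {i | c + ‖B - A‖ < |hB.eigenvalues i|}.Subsingleton := by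
  obtain ⟨u, hu⟩ := (subsingleton_setOf_lt_abs_eigenvalues_iff hA hc).1 h
  refine (subsingleton_setOf_lt_abs_eigenvalues_iff hB (by positivity)).2 ⟨u, fun v hv => ?_⟩
  calc ‖B.toEuclideanLin v‖ = ‖A.toEuclideanLin v + (B - A).toEuclideanLin v‖ := by simp
    _ ≤ ‖A.toEuclideanLin v‖ + ‖(B - A).toEuclideanLin v‖ := norm_add_le _ _
    _ ≤ c * ‖v‖ + ‖B - A‖ * ‖v‖ := add_le_add (hu v hv) (Matrix.l2_opNorm_mulVec _ _)
    _ = (c + ‖B - A‖) * ‖v‖ := by ring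

lemma norm_toEuclideanLin_le_of_inner_eigenvector_eq_zero (hA : A.IsHermitian) {c μ : ℝ}
    (hc : 0 ≤ c) (h : {i | c < |hA.eigenvalues i|}.Subsingleton) (hcμ : c < |μ|)
    {u v : EuclideanSpace 𝕜 n} (hu₀ : u ≠ 0) (hu : A.toEuclideanLin u = (μ : 𝕜) • u)
    (huv : inner 𝕜 u v = 0) : ‖A.toEuclideanLin v‖ ≤ c * ‖v‖ := by
  set b := hA.eigenvectorBasis
  have horth {j} (hj : |hA.eigenvalues j| ≤ c) : inner 𝕜 (b j) u = 0 := by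
    have hmul := inner_eigenvectorBasis_toEuclideanLin hA j u
    rw [hu, inner_smul_right] at hmul
    refine (mul_eq_mul_right_iff.1 hmul).resolve_left fun hμ => ?_
    rw [RCLike.ofReal_inj.1 hμ] at hcμ
    exact hj.not_gt hcμ
  refine norm_toEuclideanLin_le_of_inner_eq_zero hA hc fun i hi => ?_
  have hother {j} (hj : j ≠ i) : inner 𝕜 (b j) u = 0 :=
    horth (not_lt.1 fun hlt => hj (h hlt hi))
  have hui : inner 𝕜 (b i) u ≠ 0 := fun hi₀ => hu₀ <|
    ext_inner_left_basis b.toBasis fun j => by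
      by_cases hj : j = i
      · simpa [hj] using hi₀
      · simpa using hother hj
  rw [← b.sum_inner_mul_inner, Finset.sum_eq_single i
    (fun j _ hj => by rw [inner_eq_zero_symm.1 (hother hj), zero_mul]) (by simp)] at huv
  exact (mul_eq_zero.1 huv).resolve_left (mt inner_eq_zero_symm.1 hui)

end HermitianMatrix

section Spectrum

open scoped Finset Matrix.Norms.L2Operator

lemma adjMat_apply {W : Type*} (G : SimpleGraph W) (x y : W) :
    adjMat G x y = if G.Adj x y then 1 else 0 := by
  simp [adjMat, SimpleGraph.adjMatrix_apply]

lemma IsRegular.sum_adjMat {W : Type*} [Fintype W] {G : SimpleGraph W} {k : ℕ}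
    (hG : IsRegular G k) (x : W) : ∑ y, adjMat G x y = k := by
  simp only [adjMat_apply, Finset.sum_boole]
  rw [← hG x, Set.ncard_eq_toFinset_card']
  congr 2
  ext y
  simp

lemma toEuclideanLin_adjMat_apply (G : SimpleGraph V) (v : EuclideanSpace ℝ V) (x : V) :
    (adjMat G).toEuclideanLin v x = ∑ y, adjMat G x y * v y := by
  simp [Matrix.toLpLin_apply, Matrix.mulVec, dotProduct]

lemma secondLargestAbsEig_nonneg (G : SimpleGraph V) : 0 ≤ secondLargestAbsEig G := by
  rw [secondLargestAbsEig, List.getD_eq_getElem?_getD]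
  rcases lt_or_ge (Fintype.card V - 2) (sortedAbsEigs G).length with h | h
  · obtain ⟨i, -, hi⟩ := Multiset.mem_map.1 ((Multiset.mem_sort _).1 (List.getElem_mem h))
    simp [List.getElem?_eq_getElem h, ← hi]
  · simp [List.getElem?_eq_none h]

/-- On fewer than two vertices the index `card V - 2` in `secondLargestAbsEig` truncates to `0`. -/
lemma secondLargestAbsEig_le_iff [Nontrivial V] {G : SimpleGraph V} {c : ℝ} :
    secondLargestAbsEig G ≤ c ↔ {i | c < |eigs G i|}.Subsingleton := by
  have hcard := Fintype.one_lt_card (α := V)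
  have hlen : (sortedAbsEigs G).length = Fintype.card V := by simp [sortedAbsEigs]
  have hcount : (sortedAbsEigs G).countP (c < ·) = #{i | c < |eigs G i|} := by
    rw [← Multiset.coe_countP, sortedAbsEigs, Multiset.sort_eq, Multiset.countP_map]
    rfl
  have hlt : Fintype.card V - 2 < (sortedAbsEigs G).length := by omega
  have hsorted : (sortedAbsEigs G).Pairwise (· ≤ ·) := Multiset.pairwise_sort _ _
  rw [secondLargestAbsEig, List.getD_eq_getElem _ _ hlt,
    getElem_le_iff_countP_add_lt_length hsorted, hcount, hlen,
    ← Finset.coe_filter_univ, ← Finset.card_le_one_iff_subsingleton]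
  omega

lemma secondLargestAbsEig_le_add_norm_sub (G H : SimpleGraph V) :
    secondLargestAbsEig H ≤ secondLargestAbsEig G + ‖adjMat H - adjMat G‖ := by
  rcases subsingleton_or_nontrivial V with hV | hV
  · simp [Subsingleton.elim H G]
  · exact secondLargestAbsEig_le_iff.2 <| subsingleton_setOf_add_norm_sub_lt_abs_eigenvalues
      (adjMat_isHermitian G) (adjMat_isHermitian H) (secondLargestAbsEig_nonneg G)
      (secondLargestAbsEig_le_iff.1 le_rfl)

lemma IsRegular.norm_toEuclideanLin_adjMat_le {G : SimpleGraph V} {k : ℕ} (hG : IsRegular G k)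
    (v : EuclideanSpace ℝ V) : ‖(adjMat G).toEuclideanLin v‖ ≤ k * ‖v‖ := by
  have hsq (x : V) : (∑ y, adjMat G x y * v y) ^ 2 ≤ k * ∑ y, adjMat G x y * v y ^ 2 := by
    rw [← hG.sum_adjMat x]
    refine Finset.sum_sq_le_sum_mul_sum_of_sq_le_mul _ (fun y _ => ?_) (fun y _ => ?_)
      fun y _ => ?_
    all_goals rw [adjMat_apply]; split_ifs <;> simp [sq_nonneg]
  refine le_of_sq_le_sq ?_ (by positivity)
  calc ‖(adjMat G).toEuclideanLin v‖ ^ 2 = ∑ x, (∑ y, adjMat G x y * v y) ^ 2 := by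
        simp only [EuclideanSpace.real_norm_sq_eq, toEuclideanLin_adjMat_apply]
    _ ≤ ∑ x, k * ∑ y, adjMat G x y * v y ^ 2 := Finset.sum_le_sum fun x _ => hsq x
    _ = k * ∑ y, (∑ x, adjMat G y x) * v y ^ 2 := by
        rw [← Finset.mul_sum, Finset.sum_comm]
        simp only [Finset.sum_mul, adjMat_apply, G.adj_comm]
    _ = (k * ‖v‖) ^ 2 := by
        simp only [hG.sum_adjMat, ← Finset.mul_sum, mul_pow, EuclideanSpace.real_norm_sq_eq]
        ring

lemma IsRegular.norm_adjMat_le {G : SimpleGraph V} {k : ℕ} (hG : IsRegular G k) :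
    ‖adjMat G‖ ≤ k :=
  ContinuousLinearMap.opNorm_le_bound _ k.cast_nonneg hG.norm_toEuclideanLin_adjMat_le

lemma IsRegular.toEuclideanLin_adjMat_one {G : SimpleGraph V} {k : ℕ} (hG : IsRegular G k) :
    (adjMat G).toEuclideanLin (WithLp.toLp 2 1) = (k : ℝ) • WithLp.toLp 2 1 := by
  ext x
  rw [toEuclideanLin_adjMat_apply]
  simp [hG.sum_adjMat]

lemma IsRegular.norm_toEuclideanLin_adjMat_le_of_sum_eq_zero {G : SimpleGraph V} {k : ℕ}
    (hG : IsRegular G k) {v : EuclideanSpace ℝ V} (hv : ∑ x, v x = 0) :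
    ‖(adjMat G).toEuclideanLin v‖ ≤ secondLargestAbsEig G * ‖v‖ := by
  rcases le_or_gt (k : ℝ) (secondLargestAbsEig G) with hk | hk
  · exact (hG.norm_toEuclideanLin_adjMat_le v).trans (by gcongr)
  rcases subsingleton_or_nontrivial V with hV | hV
  · have hv₀ : v = 0 := by
      ext x
      rw [← Fintype.sum_subsingleton v.ofLp x]
      exact hv
    simp [hv₀]
  · refine norm_toEuclideanLin_le_of_inner_eigenvector_eq_zero (adjMat_isHermitian G)
      (secondLargestAbsEig_nonneg G) (secondLargestAbsEig_le_iff.1 le_rfl)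
      (hk.trans_le (le_abs_self _)) ?_ hG.toEuclideanLin_adjMat_one ?_
    · simp
    · simpa [PiLp.inner_apply] using hv

end Spectrum

section Deletion

open scoped Matrix.Norms.L2Operator

lemma adjMat_sdiff {W : Type*} {G H : SimpleGraph W} (h : H ≤ G) :
    adjMat (G \ H) = adjMat G - adjMat H := by
  ext x y
  by_cases hxy : H.Adj x y
  · simp [adjMat_apply, SimpleGraph.sdiff_adj, hxy, h hxy]
  · simp [adjMat_apply, SimpleGraph.sdiff_adj, hxy]

lemma IsRegular.sdiff {W : Type*} [Finite W] {G H : SimpleGraph W} {k r : ℕ}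
    (hG : IsRegular G k) (hH : IsRegular H r) (h : H ≤ G) : IsRegular (G \ H) (k - r) := by
  intro x
  have hsub : H.neighborSet x ⊆ G.neighborSet x := fun y hy => h hy
  rw [← hG x, ← hH x, ← Set.ncard_sdiff hsub]
  congr 1

lemma secondLargestAbsEig_sdiff_le {G H : SimpleGraph V} {r : ℕ} (hH : IsRegular H r)
    (h : H ≤ G) : secondLargestAbsEig (G \ H) ≤ secondLargestAbsEig G + r := by
  refine (secondLargestAbsEig_le_add_norm_sub G _).trans ?_
  rw [adjMat_sdiff h, sub_sub_cancel_left, norm_neg]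
  gcongr
  exact hH.norm_adjMat_le

lemma isRegular_one_of_isPerfectMatching {W : Type*} {G : SimpleGraph W} {M : G.Subgraph}
    (hM : M.IsPerfectMatching) : IsRegular M.spanningCoe 1 := fun x => by
  obtain ⟨y, hxy, huniq⟩ := SimpleGraph.Subgraph.isPerfectMatching_iff.1 hM x
  exact Set.ncard_eq_one.2 ⟨y, Set.eq_singleton_iff_unique_mem.2 ⟨hxy, huniq⟩⟩

lemma IsRegular.deleteEdges_perfectMatching {W : Type*} [Finite W] {G : SimpleGraph W} {k : ℕ}
    (hG : IsRegular G k) {M : G.Subgraph} (hM : M.IsPerfectMatching) :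
    IsRegular (G.deleteEdges M.edgeSet) (k - 1) := by
  rw [← M.edgeSet_spanningCoe, SimpleGraph.deleteEdges_edgeSet]
  exact hG.sdiff (isRegular_one_of_isPerfectMatching hM) M.spanningCoe_le

lemma secondLargestAbsEig_deleteEdges_perfectMatching_le {G : SimpleGraph V} {M : G.Subgraph}
    (hM : M.IsPerfectMatching) :
    secondLargestAbsEig (G.deleteEdges M.edgeSet) ≤ secondLargestAbsEig G + 1 := by
  rw [← M.edgeSet_spanningCoe, SimpleGraph.deleteEdges_edgeSet]
  exact_mod_cast
    secondLargestAbsEig_sdiff_le (isRegular_one_of_isPerfectMatching hM) M.spanningCoe_le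

end Deletion

section EdgeBoundary

open scoped Finset

lemma card_interedges_eq_sum_adjMat {W : Type*} (G : SimpleGraph W) (S T : Finset W) :
    (#(G.interedges S T) : ℝ) = ∑ x ∈ S, ∑ y ∈ T, adjMat G x y := by
  rw [SimpleGraph.interedges_def, ← Finset.sum_boole, Finset.sum_product]
  simp only [adjMat_apply]

lemma card_interedges_comm {W : Type*} (G : SimpleGraph W) (S T : Finset W) :
    #(G.interedges S T) = #(G.interedges T S) :=
  have := G.symm
  Rel.card_interedges_comm S T

lemma card_interedges_add_card_interedges_compl_right (G : SimpleGraph V) (S T : Finset V) :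
    #(G.interedges S T) + #(G.interedges S Tᶜ) = #(G.interedges S Finset.univ) := by
  rw [← Finset.card_union_of_disjoint (G.interedges_disjoint_right S disjoint_compl_right)]
  congr 1
  ext x
  simp only [Finset.mem_union, SimpleGraph.mem_interedges_iff, Finset.mem_compl, Finset.mem_univ]
  tauto

lemma IsRegular.card_interedges_univ {W : Type*} [Fintype W] {G : SimpleGraph W} {k : ℕ}
    (hG : IsRegular G k) (S : Finset W) : #(G.interedges S Finset.univ) = k * #S := by
  have h := card_interedges_eq_sum_adjMat G S Finset.univ
  simp only [hG.sum_adjMat, Finset.sum_const, nsmul_eq_mul] at h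
  rw [mul_comm]
  exact_mod_cast h

lemma IsRegular.sum_adjMat_mul_sub_sq {G : SimpleGraph V} {k : ℕ} (hG : IsRegular G k)
    (v : EuclideanSpace ℝ V) :
    ∑ x, ∑ y, adjMat G x y * (v x - v y) ^ 2 =
      2 * (k * ‖v‖ ^ 2 - inner ℝ v ((adjMat G).toEuclideanLin v)) := by
  have hfst : ∑ x, ∑ y, adjMat G x y * v x ^ 2 = k * ‖v‖ ^ 2 := by
    simp only [← Finset.sum_mul, hG.sum_adjMat, ← Finset.mul_sum, EuclideanSpace.real_norm_sq_eq]
  have hsnd : ∑ x, ∑ y, adjMat G x y * v y ^ 2 = k * ‖v‖ ^ 2 := by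
    rw [← hfst, Finset.sum_comm]
    simp only [adjMat_apply, G.adj_comm]
  have hcross : ∑ x, ∑ y, adjMat G x y * (v x * v y) =
      inner ℝ v ((adjMat G).toEuclideanLin v) := by
    simp only [PiLp.inner_apply, toEuclideanLin_adjMat_apply, RCLike.inner_apply, conj_trivial,
      Finset.sum_mul]
    exact Finset.sum_congr rfl fun x _ => Finset.sum_congr rfl fun y _ => by ring
  calc ∑ x, ∑ y, adjMat G x y * (v x - v y) ^ 2
      = ∑ x, ∑ y, adjMat G x y * v x ^ 2 + ∑ x, ∑ y, adjMat G x y * v y ^ 2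
        - 2 * ∑ x, ∑ y, adjMat G x y * (v x * v y) := by
        simp only [Finset.mul_sum, ← Finset.sum_add_distrib, ← Finset.sum_sub_distrib]
        exact Finset.sum_congr rfl fun x _ => Finset.sum_congr rfl fun y _ => by ring
    _ = 2 * (k * ‖v‖ ^ 2 - inner ℝ v ((adjMat G).toEuclideanLin v)) := by
        rw [hfst, hsnd, hcross]
        ring

lemma IsRegular.spectralGap_mul_sq_norm_le {G : SimpleGraph V} {k : ℕ} (hG : IsRegular G k)
    {v : EuclideanSpace ℝ V} (hv : ∑ x, v x = 0) :
    2 * ((k - secondLargestAbsEig G) * ‖v‖ ^ 2) ≤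
      ∑ x, ∑ y, adjMat G x y * (v x - v y) ^ 2 := by
  rw [hG.sum_adjMat_mul_sub_sq]
  have hinner : inner ℝ v ((adjMat G).toEuclideanLin v) ≤ secondLargestAbsEig G * ‖v‖ ^ 2 :=
    calc inner ℝ v ((adjMat G).toEuclideanLin v) ≤ ‖v‖ * ‖(adjMat G).toEuclideanLin v‖ :=
          real_inner_le_norm _ _
      _ ≤ ‖v‖ * (secondLargestAbsEig G * ‖v‖) := by
          gcongr
          exact hG.norm_toEuclideanLin_adjMat_le_of_sum_eq_zero hv
      _ = secondLargestAbsEig G * ‖v‖ ^ 2 := by ring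
  linarith

lemma sum_adjMat_mul_sub_sq_ite (G : SimpleGraph V) (C : Finset V) (a b : ℝ) :
    ∑ x, ∑ y, adjMat G x y * ((if x ∈ C then a else b) - if y ∈ C then a else b) ^ 2 =
      2 * ((a - b) ^ 2 * #(G.interedges C Cᶜ)) := by
  have hterm (x y : V) :
      adjMat G x y * ((if x ∈ C then a else b) - if y ∈ C then a else b) ^ 2 =
        (a - b) ^ 2 * ((if x ∈ C then if y ∈ Cᶜ then adjMat G x y else 0 else 0) +
          if x ∈ Cᶜ then if y ∈ C then adjMat G x y else 0 else 0) := by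
    by_cases hx : x ∈ C <;> by_cases hy : y ∈ C <;> simp [hx, hy] <;> ring
  have hedges (S T : Finset V) :
      ∑ x, ∑ y, (if x ∈ S then if y ∈ T then adjMat G x y else 0 else 0) =
        #(G.interedges S T) := by
    rw [card_interedges_eq_sum_adjMat]
    simp only [Finset.sum_ite_irrel, Finset.sum_const_zero, Finset.sum_ite_mem, Finset.univ_inter]
  simp only [hterm, ← Finset.mul_sum, Finset.sum_add_distrib, hedges, card_interedges_comm G Cᶜ C]
  ring

lemma IsRegular.spectralGap_mul_card_mul_card_compl_le {G : SimpleGraph V} {k : ℕ}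
    (hG : IsRegular G k) (C : Finset V) :
    (k - secondLargestAbsEig G) * (#C * #Cᶜ) ≤ Fintype.card V * #(G.interedges C Cᶜ) := by
  rcases isEmpty_or_nonempty V with hV | hV
  · simp [Finset.eq_empty_of_isEmpty C]
  have hcompl : (#C : ℝ) + #Cᶜ = Fintype.card V := by exact_mod_cast C.card_add_card_compl
  set v : EuclideanSpace ℝ V := WithLp.toLp 2 fun x => if x ∈ C then (#Cᶜ : ℝ) else -#C
  have hsplit (f : ℝ → ℝ) : ∑ x, f (v x) = #C * f #Cᶜ + #Cᶜ * f (-#C) := by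
    rw [← Finset.sum_add_sum_compl C,
      Finset.sum_congr rfl fun x hx => by rw [show v x = #Cᶜ from if_pos hx],
      Finset.sum_congr (s₁ := Cᶜ) rfl fun x hx => by
        rw [show v x = -#C from if_neg (Finset.mem_compl.1 hx)]]
    simp only [Finset.sum_const, nsmul_eq_mul]
  have hsum : ∑ x, v x = 0 := (hsplit id).trans (by simp only [id]; ring)
  have hnorm : ‖v‖ ^ 2 = Fintype.card V * (#C * #Cᶜ) := by
    rw [EuclideanSpace.real_norm_sq_eq, hsplit (· ^ 2), ← hcompl]
    ring
  have hgap := hG.spectralGap_mul_sq_norm_le hsum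
  rw [hnorm, sum_adjMat_mul_sub_sq_ite, sub_neg_eq_add, add_comm, hcompl] at hgap
  have hn : (0 : ℝ) < Fintype.card V := by exact_mod_cast Fintype.card_pos
  exact le_of_mul_le_mul_left (by linarith) hn

lemma IsRegular.le_card_interedges_compl_of_card_le {G : SimpleGraph V} {k : ℕ}
    (hG : IsRegular G k) {C : Finset V} (hC : C.Nonempty) (hCk : #C ≤ k) :
    k ≤ #(G.interedges C Cᶜ) := by
  have hinside : #(G.interedges C C) ≤ #C * #C - #C := by
    rw [← Finset.offDiag_card]
    refine Finset.card_le_card fun e he => ?_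
    obtain ⟨h₁, h₂, hadj⟩ := G.mem_interedges_iff.1 he
    exact Finset.mem_offDiag.2 ⟨h₁, h₂, hadj.ne⟩
  have htotal := card_interedges_add_card_interedges_compl_right G C C
  rw [hG.card_interedges_univ] at htotal
  have hpos := hC.card_pos
  zify [Nat.le_mul_self #C] at *
  nlinarith [mul_nonneg (sub_nonneg.2 hCk) (sub_nonneg.2 (Int.add_one_le_iff.2 hpos))]

lemma IsRegular.le_card_interedges_compl_of_two_mul_card_le {G : SimpleGraph V} {k : ℕ}
    (hG : IsRegular G k) (hgap : secondLargestAbsEig G + 2 ≤ k) {C : Finset V} (hC : C.Nonempty)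
    (hhalf : 2 * #C ≤ Fintype.card V) : k ≤ #(G.interedges C Cᶜ) := by
  rcases le_or_gt #C k with hCk | hCk
  · exact hG.le_card_interedges_compl_of_card_le hC hCk
  have hcompl := C.card_add_card_compl
  have hcut : (#C : ℝ) * Fintype.card V ≤ #(G.interedges C Cᶜ) * Fintype.card V :=
    calc (#C : ℝ) * Fintype.card V ≤ #C * (2 * #Cᶜ) := by gcongr; norm_cast; omega
      _ = 2 * (#C * #Cᶜ) := by ring
      _ ≤ (k - secondLargestAbsEig G) * (#C * #Cᶜ) := by gcongr; linarith
      _ ≤ Fintype.card V * #(G.interedges C Cᶜ) := hG.spectralGap_mul_card_mul_card_compl_le C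
      _ = #(G.interedges C Cᶜ) * Fintype.card V := mul_comm _ _
  have hn : 0 < Fintype.card V := by have := hC.card_pos; omega
  exact hCk.le.trans (Nat.le_of_mul_le_mul_right (by exact_mod_cast hcut) hn)

lemma IsRegular.card_interedges_compl_pos {G : SimpleGraph V} {k : ℕ} (hG : IsRegular G k)
    (hgap : secondLargestAbsEig G < k) {C : Finset V} (hC : C.Nonempty)
    (hC' : C ≠ Finset.univ) : 0 < #(G.interedges C Cᶜ) := by
  have : 0 < #C := hC.card_pos
  have hcompl : 0 < #Cᶜ := Finset.card_pos.2 <|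
    Finset.nonempty_iff_ne_empty.2 (mt C.compl_eq_empty_iff.1 hC')
  have hcut : (0 : ℝ) < Fintype.card V * #(G.interedges C Cᶜ) :=
    lt_of_lt_of_le (by have := sub_pos.2 hgap; positivity)
      (hG.spectralGap_mul_card_mul_card_compl_le C)
  exact_mod_cast pos_of_mul_pos_right hcut (Nat.cast_nonneg _)

lemma IsRegular.sum_card_interedges_le {W : Type*} [Finite W] {G : SimpleGraph W} {k : ℕ}
    (hG : IsRegular G k) {𝒞 : Finset (Finset W)} (h𝒞 : (𝒞 : Set (Finset W)).PairwiseDisjoint id)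
    (S : Finset W) : ∑ C ∈ 𝒞, #(G.interedges C S) ≤ k * #S := by
  cases nonempty_fintype W
  calc ∑ C ∈ 𝒞, #(G.interedges C S) = #(G.interedges (𝒞.biUnion id) S) := by
        rw [G.interedges_biUnion_left, Finset.card_biUnion fun C hC D hD hCD =>
          G.interedges_disjoint_left (h𝒞 hC hD hCD) S]
        rfl
    _ = #(G.interedges S (𝒞.biUnion id)) := card_interedges_comm G _ _
    _ ≤ #(G.interedges S Finset.univ) :=
        Finset.card_le_card (G.interedges_mono subset_rfl (Finset.subset_univ _))
    _ = k * #S := hG.card_interedges_univ S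

lemma IsRegular.card_le_card_of_interedges_subset {G : SimpleGraph V} {k : ℕ}
    (hG : IsRegular G k) (hgap : secondLargestAbsEig G + 2 ≤ k) {𝒞 : Finset (Finset V)}
    (h𝒞 : (𝒞 : Set (Finset V)).PairwiseDisjoint id) (hne : ∀ C ∈ 𝒞, C.Nonempty)
    (hproper : ∀ C ∈ 𝒞, C ≠ Finset.univ) {S : Finset V}
    (hS : ∀ C ∈ 𝒞, G.interedges C Cᶜ ⊆ G.interedges C S) : #𝒞 ≤ #S := by
  rcases 𝒞.eq_empty_or_nonempty with rfl | h𝒞₀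
  · simp
  -- Only the largest member of `𝒞` can contain more than half of the vertices.
  obtain ⟨L, hL, hmax⟩ := 𝒞.exists_max_image Finset.card h𝒞₀
  have hrest : ∀ C ∈ 𝒞.erase L, k ≤ #(G.interedges C Cᶜ) := fun C hC => by
    obtain ⟨hCL, hC⟩ := Finset.mem_erase.1 hC
    refine hG.le_card_interedges_compl_of_two_mul_card_le hgap (hne C hC) ?_
    have hdisj : Disjoint C L := h𝒞 hC hL hCL
    calc 2 * #C ≤ #C + #L := by have := hmax C hC; omega
      _ = #(C ∪ L) := (Finset.card_union_of_disjoint hdisj).symm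
      _ ≤ Fintype.card V := Finset.card_le_univ _
  have hlt : k * (#𝒞 - 1) < k * #S :=
    calc k * (#𝒞 - 1) = ∑ _ ∈ 𝒞.erase L, k := by
          rw [Finset.sum_const, Finset.card_erase_of_mem hL, smul_eq_mul, mul_comm]
      _ ≤ ∑ C ∈ 𝒞.erase L, #(G.interedges C Cᶜ) := Finset.sum_le_sum hrest
      _ < ∑ C ∈ 𝒞, #(G.interedges C Cᶜ) := by
          rw [← Finset.sum_erase_add _ _ hL]
          exact Nat.lt_add_of_pos_right
            (hG.card_interedges_compl_pos (by linarith) (hne L hL) (hproper L hL))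
      _ ≤ ∑ C ∈ 𝒞, #(G.interedges C S) :=
          Finset.sum_le_sum fun C hC => Finset.card_le_card (hS C hC)
      _ ≤ k * #S := hG.sum_card_interedges_le h𝒞 S
  have := lt_of_mul_lt_mul_left' hlt
  omega

end EdgeBoundary

section PerfectMatching

open scoped Finset

lemma interedges_compl_subset_iff {G : SimpleGraph V} {C S : Finset V} :
    G.interedges C Cᶜ ⊆ G.interedges C S ↔ ∀ x ∈ C, ∀ y ∉ C, G.Adj x y → y ∈ S := by
  simp only [Finset.subset_iff, SimpleGraph.mem_interedges_iff, Finset.mem_compl, Prod.forall]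
  grind

/-- The vertex set, as a finset of `V`, of a connected component of `G - u`; the components lost in
Tutte's condition become disjoint finsets of `V` whose edge boundaries can be counted. -/
def componentVerts {G : SimpleGraph V} {u : Set V}
    (K : ((⊤ : G.Subgraph).deleteVerts u).coe.ConnectedComponent) : Finset V :=
  (Subtype.val '' K.supp).toFinset

section ComponentVerts

variable {G : SimpleGraph V} {u : Set V}
  {K L : ((⊤ : G.Subgraph).deleteVerts u).coe.ConnectedComponent}

lemma mem_componentVerts {x : V} :
    x ∈ componentVerts K ↔ ∃ hx, SimpleGraph.connectedComponentMk _ ⟨x, hx⟩ = K := by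
  simp [componentVerts]

lemma card_componentVerts : #(componentVerts K) = K.supp.ncard := by
  rw [componentVerts, ← Set.ncard_eq_toFinset_card',
    Set.ncard_image_of_injective _ Subtype.val_injective]

lemma componentVerts_injective : Function.Injective (componentVerts (G := G) (u := u)) :=
  fun _ _ h => SimpleGraph.ConnectedComponent.supp_injective <|
    Subtype.val_injective.image_injective (Set.toFinset_inj.1 h)

lemma disjoint_componentVerts (hKL : K ≠ L) : Disjoint (componentVerts K) (componentVerts L) := by
  refine Finset.disjoint_left.2 fun x hxK hxL => hKL ?_
  obtain ⟨_, rfl⟩ := mem_componentVerts.1 hxK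
  obtain ⟨_, rfl⟩ := mem_componentVerts.1 hxL
  rfl

lemma mem_of_adj_of_mem_componentVerts {x y : V} (hx : x ∈ componentVerts K)
    (hy : y ∉ componentVerts K) (hxy : G.Adj x y) : y ∈ u := by
  obtain ⟨hxu, rfl⟩ := mem_componentVerts.1 hx
  by_contra hyu
  refine hy (mem_componentVerts.2 ⟨⟨trivial, hyu⟩, SimpleGraph.ConnectedComponent.sound ?_⟩)
  exact SimpleGraph.Adj.reachable (by simpa [hyu, hxy.symm] using hxu)

end ComponentVerts

lemma exists_isPerfectMatching_of_forall_card_le {G : SimpleGraph V}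
    (h : ∀ (S : Finset V) (𝒞 : Finset (Finset V)), (𝒞 : Set (Finset V)).PairwiseDisjoint id →
      (∀ C ∈ 𝒞, Odd #C) → (∀ C ∈ 𝒞, G.interedges C Cᶜ ⊆ G.interedges C S) → #𝒞 ≤ #S) :
    ∃ M : G.Subgraph, M.IsPerfectMatching := by
  refine SimpleGraph.tutte.2 fun u => not_lt.2 ?_
  rw [← Set.ncard_image_of_injective _ componentVerts_injective, Set.ncard_eq_toFinset_card',
    Set.ncard_eq_toFinset_card']
  apply h
  · rw [Set.coe_toFinset]
    rintro _ ⟨K, -, rfl⟩ _ ⟨L, -, rfl⟩ hKL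
    exact disjoint_componentVerts (ne_of_apply_ne _ hKL)
  all_goals
    intro C hC
    obtain ⟨K, hK, rfl⟩ := Set.mem_toFinset.1 hC
  · rwa [card_componentVerts]
  · exact interedges_compl_subset_iff.2 fun x hx y hy hxy =>
      Set.mem_toFinset.2 (mem_of_adj_of_mem_componentVerts hx hy hxy)

lemma IsRegular.exists_isPerfectMatching {G : SimpleGraph V} {k : ℕ} (hG : IsRegular G k)
    (hgap : secondLargestAbsEig G + 2 ≤ k) (heven : Even (Fintype.card V)) :
    ∃ M : G.Subgraph, M.IsPerfectMatching := by
  refine exists_isPerfectMatching_of_forall_card_le fun S 𝒞 h𝒞 hodd hS => ?_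
  refine hG.card_le_card_of_interedges_subset hgap h𝒞 (fun C hC => ?_) (fun C hC => ?_) hS
  · exact Finset.card_pos.1 (hodd C hC).pos
  · rintro rfl
    exact Nat.not_odd_iff_even.2 heven (hodd _ hC)

end PerfectMatching

section Peeling

lemma exists_isPerfectMatching_of_deleteEdges {W : Type*} {G : SimpleGraph W} {U : Set (Sym2 W)}
    {M : (G.deleteEdges U).Subgraph} (hM : M.IsPerfectMatching) :
    ∃ N : G.Subgraph, N.IsPerfectMatching ∧ N.edgeSet = M.edgeSet ∧ Disjoint U N.edgeSet := by
  have hMG : M.spanningCoe ≤ G := M.spanningCoe_le.trans (G.deleteEdges_le U)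
  have hedges : (G.toSubgraph M.spanningCoe hMG).edgeSet = M.edgeSet :=
    M.edgeSet_spanningCoe
  refine ⟨_, (SimpleGraph.Subgraph.IsPerfectMatching.toSubgraph_iff hMG).2 hM, hedges, ?_⟩
  rw [hedges]
  refine Set.disjoint_left.2 fun e heU heM => ?_
  have heH := M.edgeSet_subset heM
  rw [SimpleGraph.edgeSet_deleteEdges] at heH
  exact heH.2 heU

lemma IsRegular.exists_disjoint_perfectMatchings {G : SimpleGraph V} {k : ℕ}
    (hG : IsRegular G k) (heven : Even (Fintype.card V)) (m : ℕ)
    (hgap : secondLargestAbsEig G + 2 * m ≤ k) :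
    ∃ Ms : Fin m → G.Subgraph,
      (∀ i, (Ms i).IsPerfectMatching) ∧
      (∀ i j, i ≠ j → Disjoint (Ms i).edgeSet (Ms j).edgeSet) ∧
      IsRegular (G.deleteEdges (⋃ i, (Ms i).edgeSet)) (k - m) ∧
      secondLargestAbsEig (G.deleteEdges (⋃ i, (Ms i).edgeSet)) ≤ secondLargestAbsEig G + m := by
  induction m with
  | zero => exact ⟨Fin.elim0, fun i => i.elim0, fun i => i.elim0, by simpa, by simp⟩
  | succ m ih =>
    push_cast at hgap
    obtain ⟨Ms, hperf, hdisj, hreg, hlam⟩ := ih (by linarith)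
    set U := ⋃ i, (Ms i).edgeSet with hU
    have hmk : m ≤ k := by
      have := secondLargestAbsEig_nonneg G
      exact_mod_cast (by linarith : (m : ℝ) ≤ k)
    obtain ⟨M, hM⟩ := hreg.exists_isPerfectMatching
      (by rw [Nat.cast_sub hmk]; linarith) heven
    obtain ⟨N, hN, hNM, hNU⟩ := exists_isPerfectMatching_of_deleteEdges hM
    have hNMs (i : Fin m) : Disjoint (Ms i).edgeSet N.edgeSet :=
      hNU.mono_left (Set.subset_iUnion (fun i => (Ms i).edgeSet) i)
    have hdel : G.deleteEdges (⋃ i, ((Fin.cons N Ms : Fin (m + 1) → G.Subgraph) i).edgeSet) =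
        (G.deleteEdges U).deleteEdges M.edgeSet := by
      rw [SimpleGraph.deleteEdges_deleteEdges, ← hNM, Set.union_comm]
      congr 1
      ext e
      simp [hU, Fin.exists_fin_succ]
    refine ⟨Fin.cons N Ms, Fin.cases hN hperf, ?_, ?_, ?_⟩
    · refine Fin.cases (Fin.cases (absurd rfl) fun j _ => (hNMs j).symm)
        fun i => Fin.cases (fun _ => hNMs i) fun j hij => hdisj i j (ne_of_apply_ne _ hij)
    · rw [hdel, ← Nat.sub_sub]
      exact hreg.deleteEdges_perfectMatching hM
    · rw [hdel]
      have := secondLargestAbsEig_deleteEdges_perfectMatching_le hM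
      push_cast
      linarith

end Peeling

section Girth

variable {W : Type*} [Finite W] {G H : SimpleGraph W}

lemma not_isAcyclic_of_two_le_ncard_neighborSet [Nonempty W]
    (hdeg : ∀ x, 2 ≤ (G.neighborSet x).ncard) : ¬ G.IsAcyclic := by
  intro hacyclic
  cases nonempty_fintype W
  obtain ⟨T, hGT, -, hT, hreach⟩ :=
    SimpleGraph.exists_isAcyclic_reachable_eq_le_of_le_of_isAcyclic (le_top (a := G)) hacyclic
  have htree : T.IsTree :=
    ⟨⟨fun x y => hreach ▸ SimpleGraph.connected_top.preconnected x y⟩, hT⟩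
  have hdegT (x : W) : 2 ≤ T.degree x := by
    rw [← SimpleGraph.card_neighborSet_eq_degree, ← Nat.card_eq_fintype_card,
      Nat.card_coe_set_eq]
    exact (hdeg x).trans (Set.ncard_le_ncard fun y hy => hGT hy)
  obtain ⟨x⟩ := ‹Nonempty W›
  obtain ⟨y, hxy⟩ := (T.degree_pos_iff_exists_adj (v := x)).1 (by linarith [hdegT x])
  have : Nontrivial W := ⟨x, y, hxy.ne⟩
  obtain ⟨leaf, hleaf⟩ := htree.exists_vert_degree_one_of_nontrivial
  linarith [hdegT leaf]

/-- Without the degree condition `H` could be acyclic, and then `H.girth = 0`. -/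
lemma girth_le_girth_of_le (h : H ≤ G) (hdeg : ∀ x, 2 ≤ (H.neighborSet x).ncard) :
    G.girth ≤ H.girth := by
  rcases isEmpty_or_nonempty W with hW | hW
  · rw [Subsingleton.elim H G]
  · exact SimpleGraph.girth_anti h (not_isAcyclic_of_two_le_ncard_neighborSet hdeg)

end Girth

section Numerics

lemma two_mul_sqrt_add_two_mul_le {m p : ℕ} (h : 6 * m < p) :
    2 * √(p : ℝ) + 2 * m ≤ p + 1 := by
  have hsq : √(p : ℝ) ^ 2 = p := Real.sq_sqrt p.cast_nonneg
  rcases m.eq_zero_or_pos with rfl | hm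
  · push_cast
    linarith [sq_nonneg (√(p : ℝ) - 1)]
  · have hroot : 5 / 2 ≤ √(p : ℝ) := by
      refine Real.le_sqrt_of_sq_le ?_
      have : (7 : ℝ) ≤ p := by exact_mod_cast (by omega : 7 ≤ p)
      linarith
    have hm' : (6 * m + 1 : ℝ) ≤ p := by exact_mod_cast h
    nlinarith

lemma two_mul_sqrt_add_sub_le {d p : ℝ} (hd : 1 ≤ d) (hdp : d ≤ p) (h : 5 * p ≤ 6 * d) :
    2 * √p + (p - d) ≤ 2 * √d + 2 / 5 * d := by
  have hroots : 2 * (√p - √d) ≤ p - d :=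
    calc 2 * (√p - √d) ≤ (√p + √d) * (√p - √d) := by
          gcongr
          · exact sub_nonneg.2 (Real.sqrt_le_sqrt hdp)
          · linarith [Real.one_le_sqrt.2 hd, Real.one_le_sqrt.2 (hd.trans hdp)]
      _ = p - d := by
          rw [← sq_sub_sq, Real.sq_sqrt (by linarith), Real.sq_sqrt (by linarith)]
  linarith

end Numerics

theorem stmt_16_general {V : Type*} [Fintype V] [DecidableEq V]
    (p d : ℕ) (hgap : 5 * p < 6 * d) (hd : d ≤ p)
    (R : SimpleGraph V) (hreg : IsRegular R (p + 1))
    (heven : Even (Fintype.card V))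
    (hlam : secondLargestAbsEig R ≤ 2 * Real.sqrt p) :
    ∃ Ms : Fin (p - d) → R.Subgraph,
      (∀ i, (Ms i).IsPerfectMatching) ∧
      (∀ i j, i ≠ j → Disjoint (Ms i).edgeSet (Ms j).edgeSet) ∧
      IsRegular (R.deleteEdges (⋃ i, (Ms i).edgeSet)) (d + 1) ∧
      secondLargestAbsEig (R.deleteEdges (⋃ i, (Ms i).edgeSet)) ≤
        2 * Real.sqrt d + (2 / 5) * d ∧
      R.girth ≤ (R.deleteEdges (⋃ i, (Ms i).edgeSet)).girth := by
  have hroom : secondLargestAbsEig R + 2 * (p - d : ℕ) ≤ (p + 1 : ℕ) := by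
    have := two_mul_sqrt_add_two_mul_le (by omega : 6 * (p - d) < p)
    push_cast
    linarith
  obtain ⟨Ms, hperf, hdisj, hregH, hlamH⟩ :=
    hreg.exists_disjoint_perfectMatchings heven (p - d) hroom
  rw [show p + 1 - (p - d) = d + 1 by omega] at hregH
  refine ⟨Ms, hperf, hdisj, hregH, ?_,
    girth_le_girth_of_le (R.deleteEdges_le _) fun x => by rw [hregH x]; omega⟩
  have hfinal := two_mul_sqrt_add_sub_le (d := d) (p := p)
    (by exact_mod_cast (by omega : 1 ≤ d)) (by exact_mod_cast hd) (by exact_mod_cast hgap.le)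
  rw [Nat.cast_sub hd] at hlamH
  linarith

/-- deleting `p - d` edge-disjoint perfect matchings from an LPS-type
`(p+1)`-regular expander, for `d` between `q` and `p` with `p - q < q/5`. -/
theorem stmt_16 {V : Type*} [Fintype V] [DecidableEq V]
    (p q : ℕ) (hp : Nat.Prime p) (hpodd : Odd p) (hq : 12 ≤ q)
    (hgap : (p : ℝ) - q < (1 / 5) * q)
    (d : ℕ) (hd₁ : q ≤ d) (hd₂ : d ≤ p)
    (R : SimpleGraph V) (hreg : IsRegular R (p + 1))
    (heven : Even (Fintype.card V))
    (hlam : secondLargestAbsEig R ≤ 2 * Real.sqrt p) :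
    ∃ Ms : Fin (p - d) → R.Subgraph,
      (∀ i, (Ms i).IsPerfectMatching) ∧
      (∀ i j, i ≠ j → Disjoint (Ms i).edgeSet (Ms j).edgeSet) ∧
      IsRegular (R.deleteEdges (⋃ i, (Ms i).edgeSet)) (d + 1) ∧
      secondLargestAbsEig (R.deleteEdges (⋃ i, (Ms i).edgeSet)) ≤
        2 * Real.sqrt d + (2 / 5) * d ∧
      R.girth ≤ (R.deleteEdges (⋃ i, (Ms i).edgeSet)).girth := by
  have hgap' : 5 * p < 6 * d := by
    have hqd : (q : ℝ) ≤ d := by exact_mod_cast hd₁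
    exact_mod_cast (by linarith : (5 * p : ℝ) < 6 * d)
  exact stmt_16_general p d hgap' hd₂ R hreg heven hlam

end Formal
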